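/- arXiv:math/0703164 — 4 statements merged into one kernel-verified Lean document; each statement's English description precedes it below -/
import Mathlib

section
/- Let f(x) = (τ/2)·x² + σ·x + κ be a real quadratic polynomial with τ ≠ 0, and let d_f : 𝒮 → 𝒮 be the twisted differential d_f(α) = α′ − f′·α. If τ < 0, then the kernel of d_f is the one-dimensional subspace ℝ·e^f (the Gaussian e^f lies in 𝒮) and d_f is surjective. If τ > 0, then d_f is injective and its range is exactly {β ∈ 𝒮 : ∫_ℝ e^{−f(t)}·β(t) dt = 0}, so the quotient 𝒮 / range(d_f) is one-dimensional. Hence the two-term complex 0 → 𝒮 →^{d_f} 𝒮 → 0 has one-dimensional total cohomology, concentrated in degree 0 when τ < 0 and in degree 1 when τ > 0. -/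
open MeasureTheory

/-!
The integrating factor `e^{-f}` conjugates `d_f` to `d/dx`, so `d_f α = β` is solved by
`α(x) = e^{f(x)} ∫ e^{-f(t)} β(t) dt` over a suitable interval ending at `x`. The only issue is
whether `α` decays rapidly, and this holds whenever `(1 + x²)^k e^{f(x)}` is controlled by
`(1 + t²)^k e^{f(t)}` on the interval of integration. If `x f'(x) → -∞`, the weights
`(1 + x²)^k e^f` decrease away from `0` up to constants, so one integrates from `0`. If
`x f'(x) ≥ 0` outside a compact set, they increase away from `0`, so one integrates from infinity;
this must give the same answer from both ends, which is the condition `∫ e^{-f} β = 0`.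
-/

open Filter Topology SchwartzMap
open scoped ContDiff

section RadialGrowth

variable {g f : ℝ → ℝ}

lemma exists_le_add_of_eventually_deriv_nonneg (hg : Differentiable ℝ g)
    (h : ∀ᶠ x in atTop, 0 ≤ deriv g x) :
    ∃ C, ∀ t x, 0 ≤ t → t ≤ x → g t ≤ g x + C := by
  obtain ⟨a, ha⟩ := eventually_atTop.1 h
  have hmono : MonotoneOn g (Set.Ici a) :=
    monotoneOn_of_deriv_nonneg (convex_Ici a) hg.continuous.continuousOn
      hg.differentiableOn fun x hx => ha x (interior_subset hx)
  obtain ⟨B, hB⟩ := isCompact_Icc.exists_bound_of_continuousOn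
    (s := Set.Icc 0 a) hg.continuous.continuousOn
  refine ⟨2 * |B|, fun t x ht htx => ?_⟩
  have hbound : ∀ y, 0 ≤ y → y ≤ a → |g y| ≤ |B| := fun y hy hya =>
    (hB y ⟨hy, hya⟩).trans (le_abs_self B)
  rcases le_total a t with hat | hta
  · linarith [hmono hat (hat.trans htx) htx, abs_nonneg B]
  have hgt := abs_le.1 (hbound t ht hta)
  rcases le_total x a with hxa | hax
  · linarith [hgt.2, (abs_le.1 (hbound x (ht.trans htx) hxa)).1]
  · linarith [hgt.2, (abs_le.1 (hbound a (ht.trans hta) le_rfl)).1,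
      hmono Set.self_mem_Ici hax hax]

lemma exists_le_add_of_eventually_mul_deriv_nonneg (hg : Differentiable ℝ g)
    (h : ∀ᶠ x in cocompact ℝ, 0 ≤ x * deriv g x) :
    ∃ C, ∀ x, ∀ t ∈ Set.uIcc 0 x, g t ≤ g x + C := by
  obtain ⟨C, hC⟩ := exists_le_add_of_eventually_deriv_nonneg hg <| by
    filter_upwards [h.filter_mono atTop_le_cocompact, eventually_gt_atTop 0] with x hx hx0
    exact nonneg_of_mul_nonneg_right hx hx0
  obtain ⟨D, hD⟩ := exists_le_add_of_eventually_deriv_nonneg (g := fun x => g (-x))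
      (by fun_prop) <| by
    filter_upwards [tendsto_neg_atTop_atBot.eventually (h.filter_mono atBot_le_cocompact),
      eventually_gt_atTop 0] with x hx hx0
    rw [deriv_comp_neg]
    exact nonneg_of_mul_nonneg_right (by linarith) hx0
  refine ⟨max C D, fun x t ht => ?_⟩
  rcases le_total 0 x with hx | hx
  · rw [Set.uIcc_of_le hx] at ht
    linarith [hC t x ht.1 ht.2, le_max_left C D]
  · rw [Set.uIcc_of_ge hx] at ht
    have := hD (-t) (-x) (by linarith [ht.2]) (by linarith [ht.1])
    simp only [neg_neg] at this
    linarith [le_max_right C D]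

lemma exists_weight_mul_exp_le_of_tendsto_atBot (hf : Differentiable ℝ f)
    (h : Tendsto (fun x => x * deriv f x) (cocompact ℝ) atBot) (k : ℕ) :
    ∃ C, 0 ≤ C ∧ ∀ x, ∀ t ∈ Set.uIcc 0 x,
      (1 + x ^ 2) ^ k * Real.exp (f x) ≤ C * ((1 + t ^ 2) ^ k * Real.exp (f t)) := by
  have hweight : ∀ x : ℝ, (1 + x ^ 2) ^ k * Real.exp (f x)
      = Real.exp (-(-f x - k * Real.log (1 + x ^ 2))) := fun x => by
    rw [neg_sub, sub_neg_eq_add, Real.exp_add, Real.exp_nat_mul, Real.exp_log (by positivity)]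
  have hderiv : ∀ x, HasDerivAt (fun y => -f y - k * Real.log (1 + y ^ 2))
      (-deriv f x - k * (2 * x / (1 + x ^ 2))) x := fun x => by
    refine (hf x).hasDerivAt.fun_neg.fun_sub (HasDerivAt.const_mul _ (HasDerivAt.log ?_ ?_))
    · simpa using (hasDerivAt_pow 2 x).const_add 1
    · positivity
  obtain ⟨C, hC⟩ := exists_le_add_of_eventually_mul_deriv_nonneg
      (fun x => (hderiv x).differentiableAt) <| by
    filter_upwards [h.eventually_le_atBot (-(2 * k))] with x hx
    rw [(hderiv x).deriv]
    have hfrac : x ^ 2 / (1 + x ^ 2) ≤ 1 := div_le_one_of_le₀ (by linarith) (by positivity)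
    calc (0 : ℝ) ≤ -(x * deriv f x) - 2 * k * (x ^ 2 / (1 + x ^ 2)) := by
          linarith [mul_le_mul_of_nonneg_left hfrac (by positivity : (0 : ℝ) ≤ 2 * k)]
      _ = x * (-deriv f x - k * (2 * x / (1 + x ^ 2))) := by ring
  refine ⟨Real.exp C, (Real.exp_pos C).le, fun x t ht => ?_⟩
  rw [hweight, hweight, ← Real.exp_add, Real.exp_le_exp]
  linarith [hC x t ht]

lemma exists_weight_mul_exp_le_of_mul_deriv_nonneg (hf : Differentiable ℝ f)
    (h : ∀ᶠ x in cocompact ℝ, 0 ≤ x * deriv f x) :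
    ∃ C, 0 ≤ C ∧ ∀ (k : ℕ) (t : ℝ), ∀ x ∈ Set.uIcc 0 t,
      (1 + x ^ 2) ^ k * Real.exp (f x) ≤ C * ((1 + t ^ 2) ^ k * Real.exp (f t)) := by
  obtain ⟨C, hC⟩ := exists_le_add_of_eventually_mul_deriv_nonneg hf h
  refine ⟨Real.exp C, (Real.exp_pos C).le, fun k t x hx => ?_⟩
  have hxt : x ^ 2 ≤ t ^ 2 := sq_le_sq.2 (by simpa using Set.abs_sub_left_of_mem_uIcc hx)
  calc (1 + x ^ 2) ^ k * Real.exp (f x) ≤ (1 + t ^ 2) ^ k * Real.exp (f t + C) := by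
        gcongr
        exact hC t x hx
    _ = Real.exp C * ((1 + t ^ 2) ^ k * Real.exp (f t)) := by rw [Real.exp_add]; ring

lemma exists_exp_neg_le_of_mul_deriv_nonneg (hf : Differentiable ℝ f)
    (h : ∀ᶠ x in cocompact ℝ, 0 ≤ x * deriv f x) : ∃ C, ∀ x, Real.exp (-f x) ≤ C := by
  obtain ⟨C, hC⟩ := exists_le_add_of_eventually_mul_deriv_nonneg hf h
  exact ⟨Real.exp (C - f 0), fun x =>
    Real.exp_le_exp.2 (by linarith [hC x 0 Set.left_mem_uIcc])⟩

end RadialGrowth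

section RapidDecay

variable {E : Type*} [NormedAddCommGroup E]

/-- Rapid decay of a function on the line, without any condition on its derivatives. The weights
`(1 + x²)^k` are used instead of `|x|^k` because they are smooth and nowhere zero. -/
def HasRapidDecay (α : ℝ → E) : Prop :=
  ∀ k : ℕ, ∃ C, ∀ x, (1 + x ^ 2) ^ k * ‖α x‖ ≤ C

lemma HasRapidDecay.add {α β : ℝ → E} (hα : HasRapidDecay α)
    (hβ : HasRapidDecay β) : HasRapidDecay fun x => α x + β x := fun k => by
  obtain ⟨C, hC⟩ := hα k
  obtain ⟨D, hD⟩ := hβ k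
  refine ⟨C + D, fun x => ?_⟩
  calc (1 + x ^ 2) ^ k * ‖α x + β x‖ ≤ (1 + x ^ 2) ^ k * (‖α x‖ + ‖β x‖) := by
        gcongr
        exact norm_add_le _ _
    _ ≤ C + D := by linarith [hC x, hD x]

variable [NormedSpace ℝ E] {α : ℝ → E}

lemma hasRapidDecay_schwartzMap (β : 𝓢(ℝ, E)) : HasRapidDecay β := fun k => by
  have hw : (fun x : ℝ => (1 + x ^ 2) ^ k).HasTemperateGrowth := by fun_prop
  refine ⟨_, fun x => le_of_eq_of_le ?_
    (norm_le_seminorm ℝ (smulLeftCLM E (fun x : ℝ => (1 + x ^ 2) ^ k) β) x)⟩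
  rw [smulLeftCLM_apply_apply hw, norm_smul, Real.norm_of_nonneg (by positivity)]

lemma integrable_weight_mul_norm_schwartzMap (β : 𝓢(ℝ, E)) (k : ℕ) :
    Integrable fun x => (1 + x ^ 2) ^ k * ‖β x‖ := by
  have hw : (fun x : ℝ => (1 + x ^ 2) ^ k).HasTemperateGrowth := by fun_prop
  refine (smulLeftCLM E (fun x : ℝ => (1 + x ^ 2) ^ k) β).integrable.norm.congr
    (.of_forall fun x => ?_)
  simp only [smulLeftCLM_apply_apply hw]
  rw [norm_smul, Real.norm_of_nonneg (by positivity)]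

lemma HasRapidDecay.smul {p : ℝ → ℝ} (hp : p.HasTemperateGrowth) (hα : HasRapidDecay α) :
    HasRapidDecay fun x => p x • α x := fun k => by
  obtain ⟨m, C, hC0, hC⟩ := hp.norm_iteratedFDeriv_le_uniform 0
  obtain ⟨D, hD⟩ := hα (k + m)
  refine ⟨C * 2 ^ m * D, fun x => ?_⟩
  have hpx : ‖p x‖ ≤ C * (1 + |x|) ^ m := by simpa using hC 0 le_rfl x
  have hweight : 1 + |x| ≤ 2 * (1 + x ^ 2) := by
    nlinarith [sq_nonneg (|x| - 1), sq_abs x]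
  calc (1 + x ^ 2) ^ k * ‖p x • α x‖
      ≤ (1 + x ^ 2) ^ k * (C * (2 * (1 + x ^ 2)) ^ m * ‖α x‖) := by
        rw [norm_smul]
        gcongr
        exact hpx.trans (by gcongr)
    _ = C * 2 ^ m * ((1 + x ^ 2) ^ (k + m) * ‖α x‖) := by rw [mul_pow, pow_add]; ring
    _ ≤ C * 2 ^ m * D := by gcongr; exact hD x

lemma HasRapidDecay.exists_abs_pow_mul_norm_le (hα : HasRapidDecay α) (k : ℕ) :
    ∃ C, ∀ x, |x| ^ k * ‖α x‖ ≤ C := by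
  have hpow : (fun x : ℝ => x ^ k).HasTemperateGrowth := by fun_prop
  obtain ⟨C, hC⟩ := hα.smul hpow 0
  exact ⟨C, fun x => by simpa [norm_smul] using hC x⟩

end RapidDecay

section Regularity

variable {E : Type*} [NormedAddCommGroup E] [NormedSpace ℝ E] {p : ℝ → ℝ} {α : ℝ → E}

lemma hasTemperateGrowth_deriv (hp : p.HasTemperateGrowth) : (deriv p).HasTemperateGrowth := by
  refine ⟨(contDiff_infty_iff_deriv.1 hp.1).2, fun n => ?_⟩
  obtain ⟨k, C, hC⟩ := hp.2 (n + 1)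
  refine ⟨k, C, fun x => ?_⟩
  simpa only [norm_iteratedFDeriv_eq_norm_iteratedDeriv, iteratedDeriv_succ'] using hC x

lemma exists_iteratedDeriv_eq_smul_add {β : 𝓢(ℝ, E)} (hp : p.HasTemperateGrowth)
    (hα : ∀ x, HasDerivAt α (p x • α x + β x) x) (n : ℕ) :
    ∃ (q : ℝ → ℝ) (γ : 𝓢(ℝ, E)), q.HasTemperateGrowth ∧
      iteratedDeriv n α = fun x => q x • α x + γ x := by
  induction n with
  | zero => exact ⟨fun _ => 1, 0, by fun_prop, by ext x; simp⟩
  | succ n ih =>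
    obtain ⟨q, γ, hq, hn⟩ := ih
    refine ⟨fun x => deriv q x + q x * p x, smulLeftCLM E q β + derivCLM ℝ E γ,
      (hasTemperateGrowth_deriv hq).add (hq.mul hp), funext fun x => ?_⟩
    have hqx : HasDerivAt q (deriv q x) x :=
      (hq.1.differentiable (by simp) x).hasDerivAt
    rw [iteratedDeriv_succ, hn, ((hqx.fun_smul (hα x)).fun_add (γ.hasDerivAt x)).deriv]
    simp only [add_apply, smulLeftCLM_apply_apply hq, derivCLM_apply]
    module

lemma HasRapidDecay.exists_schwartzMap_eq {β : 𝓢(ℝ, E)} (hdecay : HasRapidDecay α)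
    (hp : p.HasTemperateGrowth) (hα : ∀ x, HasDerivAt α (p x • α x + β x) x) :
    ∃ γ : 𝓢(ℝ, E), ⇑γ = α := by
  have hiter := exists_iteratedDeriv_eq_smul_add hp hα
  refine ⟨⟨α, contDiff_of_differentiable_iteratedDeriv fun n _ => ?_, fun k n => ?_⟩, rfl⟩
  · obtain ⟨q, γ, hq, hn⟩ := hiter n
    rw [hn]
    exact ((hq.1.differentiable (by simp)).smul fun x => (hα x).differentiableAt).add
      γ.differentiable
  · obtain ⟨q, γ, hq, hn⟩ := hiter n
    have hn_decay := (hdecay.smul hq).add (hasRapidDecay_schwartzMap γ)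
    simpa only [norm_iteratedFDeriv_eq_norm_iteratedDeriv, hn, Real.norm_eq_abs]
      using hn_decay.exists_abs_pow_mul_norm_le k

end Regularity

section IntegratingFactor

variable {E : Type*} [NormedAddCommGroup E] [NormedSpace ℝ E]

lemma hasDerivAt_exp_neg_smul {f : ℝ → ℝ} {α : ℝ → E} {f' x : ℝ} {α' : E}
    (hf : HasDerivAt f f' x) (hα : HasDerivAt α α' x) :
    HasDerivAt (fun y => Real.exp (-f y) • α y) (Real.exp (-f x) • (α' - f' • α x)) x :=
  (hf.fun_neg.exp.fun_smul hα).congr_deriv (by module)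

lemma hasDerivAt_exp_smul {f : ℝ → ℝ} {h : ℝ → E} {f' x : ℝ} {b : E}
    (hf : HasDerivAt f f' x) (hh : HasDerivAt h (Real.exp (-f x) • b) x) :
    HasDerivAt (fun y => Real.exp (f y) • h y) (f' • Real.exp (f x) • h x + b) x := by
  refine (hf.exp.fun_smul hh).congr_deriv ?_
  rw [smul_smul (Real.exp (f x)) (Real.exp (-f x)), ← Real.exp_add, add_neg_cancel, Real.exp_zero]
  module

lemma hasDerivAt_setIntegral_Iic [CompleteSpace E] {G : ℝ → E} (hG : Continuous G)
    (hint : Integrable G) (x : ℝ) : HasDerivAt (fun y => ∫ t in Set.Iic y, G t) (G x) x := by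
  have hsplit : (fun y => ∫ t in Set.Iic y, G t)
      = fun y => (∫ t in (0 : ℝ)..y, G t) + ∫ t in Set.Iic 0, G t := funext fun y =>
    eq_add_of_sub_eq (intervalIntegral.integral_Iic_sub_Iic hint.integrableOn hint.integrableOn)
  rw [hsplit]
  exact (hG.integral_hasStrictDerivAt 0 x).hasDerivAt.add_const _

lemma weight_mul_norm_exp_smul_setIntegral_le {f w : ℝ → ℝ} {β : ℝ → E} {S : Set ℝ} {C x : ℝ}
    (hw : ∀ t, 0 ≤ w t) (hC : 0 ≤ C) (hβ : Integrable fun t => w t * ‖β t‖)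
    (hS : MeasurableSet S)
    (hle : ∀ t ∈ S, w x * Real.exp (f x) ≤ C * (w t * Real.exp (f t))) :
    w x * ‖Real.exp (f x) • ∫ t in S, Real.exp (-f t) • β t‖ ≤ C * ∫ t, w t * ‖β t‖ := by
  have hpoint : ∀ t ∈ S, ‖(w x * Real.exp (f x)) • Real.exp (-f t) • β t‖
      ≤ C * (w t * ‖β t‖) := fun t ht => by
    have hcancel : Real.exp (f t) * Real.exp (-f t) = 1 := by
      rw [← Real.exp_add, add_neg_cancel, Real.exp_zero]
    rw [norm_smul, norm_smul, Real.norm_of_nonneg (mul_nonneg (hw x) (Real.exp_pos _).le),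
      Real.norm_of_nonneg (Real.exp_pos _).le]
    calc w x * Real.exp (f x) * (Real.exp (-f t) * ‖β t‖)
        ≤ C * (w t * Real.exp (f t)) * (Real.exp (-f t) * ‖β t‖) :=
          mul_le_mul_of_nonneg_right (hle t ht) (by positivity)
      _ = C * (w t * ‖β t‖) := by linear_combination C * w t * ‖β t‖ * hcancel
  calc w x * ‖Real.exp (f x) • ∫ t in S, Real.exp (-f t) • β t‖
      = ‖∫ t in S, (w x * Real.exp (f x)) • Real.exp (-f t) • β t‖ := by
        rw [integral_smul, mul_smul, norm_smul (w x), Real.norm_of_nonneg (hw x)]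
    _ ≤ ∫ t in S, C * (w t * ‖β t‖) :=
        norm_integral_le_of_norm_le (hβ.const_mul C).integrableOn
          ((ae_restrict_mem hS).mono hpoint)
    _ ≤ ∫ t, C * (w t * ‖β t‖) :=
        setIntegral_le_integral (hβ.const_mul C)
          (.of_forall fun t => mul_nonneg hC (mul_nonneg (hw t) (norm_nonneg _)))
    _ = C * ∫ t, w t * ‖β t‖ := integral_const_mul _ _

end IntegratingFactor

section TwistedDifferential

variable {E : Type*} [NormedAddCommGroup E] [NormedSpace ℝ E] {f : ℝ → ℝ}

/-- The twisted (Witten) differential `d_f α = α′ − f′ · α` on Schwartz functions. It is meaningful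
when `f′` has temperate growth; for other `f`, the second term is `0` by the convention of
`SchwartzMap.smulLeftCLM`. -/
noncomputable def twistedDifferential (f : ℝ → ℝ) : 𝓢(ℝ, E) →L[ℝ] 𝓢(ℝ, E) :=
  derivCLM ℝ E - smulLeftCLM E (deriv f)

lemma twistedDifferential_apply (hf : f.HasTemperateGrowth) (α : 𝓢(ℝ, E)) (x : ℝ) :
    twistedDifferential f α x = deriv α x - deriv f x • α x := by
  simp [twistedDifferential, hasTemperateGrowth_deriv hf]

lemma twistedDifferential_eq_iff (hf : f.HasTemperateGrowth) {α β : 𝓢(ℝ, E)} :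
    twistedDifferential f α = β ↔ ∀ x, deriv α x - deriv f x • α x = β x := by
  simp only [SchwartzMap.ext_iff, twistedDifferential_apply hf]

lemma hasDerivAt_exp_neg_smul_schwartzMap (hf : f.HasTemperateGrowth) (α : 𝓢(ℝ, E)) (x : ℝ) :
    HasDerivAt (fun y => Real.exp (-f y) • α y)
      (Real.exp (-f x) • twistedDifferential f α x) x := by
  rw [twistedDifferential_apply hf]
  exact hasDerivAt_exp_neg_smul (hf.1.differentiable (by simp) x).hasDerivAt (α.hasDerivAt x)

lemma exists_twistedDifferential_eq (hf : f.HasTemperateGrowth) {β : 𝓢(ℝ, E)} {h : ℝ → E}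
    (hh : ∀ x, HasDerivAt h (Real.exp (-f x) • β x) x)
    (hdecay : HasRapidDecay fun x => Real.exp (f x) • h x) :
    ∃ α : 𝓢(ℝ, E), (∀ x, α x = Real.exp (f x) • h x) ∧ twistedDifferential f α = β := by
  have hderiv := fun x =>
    hasDerivAt_exp_smul (hf.1.differentiable (by simp) x).hasDerivAt (hh x)
  obtain ⟨α, hα⟩ := hdecay.exists_schwartzMap_eq (hasTemperateGrowth_deriv hf) hderiv
  refine ⟨α, congrFun hα, (twistedDifferential_eq_iff hf).2 fun x => ?_⟩
  rw [hα, (hderiv x).deriv, add_sub_cancel_left]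

lemma twistedDifferential_eq_zero_iff (hf : f.HasTemperateGrowth) {α : 𝓢(ℝ, E)} :
    twistedDifferential f α = 0 ↔ ∃ c : E, ∀ x, α x = Real.exp (f x) • c := by
  constructor
  · intro hα
    have hconst : ∀ x, HasDerivAt (fun y => Real.exp (-f y) • α y) 0 x := fun x => by
      simpa [hα] using hasDerivAt_exp_neg_smul_schwartzMap hf α x
    refine ⟨Real.exp (-f 0) • α 0, fun x => ?_⟩
    rw [← is_const_of_deriv_eq_zero (fun y => (hconst y).differentiableAt)
      (fun y => (hconst y).deriv) x 0, smul_smul, ← Real.exp_add, add_neg_cancel, Real.exp_zero,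
      one_smul]
  · rintro ⟨c, hc⟩
    refine (twistedDifferential_eq_iff hf).2 fun x => ?_
    have hconst : HasDerivAt (fun _ : ℝ => c) (Real.exp (-f x) • (0 : E)) x := by
      simpa using hasDerivAt_const x c
    have hderiv := hasDerivAt_exp_smul (hf.1.differentiable (by simp) x).hasDerivAt hconst
    rw [funext hc, hderiv.deriv, add_zero, sub_self, zero_apply]

lemma hasRapidDecay_exp_smul_intervalIntegral (hf : Differentiable ℝ f)
    (h : Tendsto (fun x => x * deriv f x) (cocompact ℝ) atBot) (β : 𝓢(ℝ, E)) :
    HasRapidDecay fun x => Real.exp (f x) • ∫ t in (0 : ℝ)..x, Real.exp (-f t) • β t := fun k => by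
  obtain ⟨C, hC0, hC⟩ := exists_weight_mul_exp_le_of_tendsto_atBot hf h k
  refine ⟨C * ∫ t, (1 + t ^ 2) ^ k * ‖β t‖, fun x => ?_⟩
  rw [norm_smul, intervalIntegral.norm_intervalIntegral_eq, ← norm_smul]
  exact weight_mul_norm_exp_smul_setIntegral_le (w := fun t => (1 + t ^ 2) ^ k)
    (fun t => by positivity) hC0 (integrable_weight_mul_norm_schwartzMap β k) measurableSet_uIoc
    fun t ht => hC x t (Set.uIoc_subset_uIcc ht)

lemma exists_schwartzMap_eq_exp (hf : f.HasTemperateGrowth)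
    (h : Tendsto (fun x => x * deriv f x) (cocompact ℝ) atBot) :
    ∃ g : 𝓢(ℝ, ℝ), ∀ x, g x = Real.exp (f x) := by
  have hdecay : HasRapidDecay fun x => Real.exp (f x) • (1 : ℝ) := fun k => by
    obtain ⟨C, -, hC⟩ :=
      exists_weight_mul_exp_le_of_tendsto_atBot (hf.1.differentiable (by simp)) h k
    exact ⟨_, fun x => by simpa using hC x 0 Set.left_mem_uIcc⟩
  obtain ⟨g, hg, -⟩ := exists_twistedDifferential_eq (β := 0) hf
    (fun x => by simpa using hasDerivAt_const x (1 : ℝ)) hdecay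
  exact ⟨g, by simpa using hg⟩

lemma twistedDifferential_surjective [CompleteSpace E] (hf : f.HasTemperateGrowth)
    (h : Tendsto (fun x => x * deriv f x) (cocompact ℝ) atBot) :
    Function.Surjective (twistedDifferential f : 𝓢(ℝ, E) → 𝓢(ℝ, E)) := fun β => by
  have hcont : Continuous fun t => Real.exp (-f t) • β t := by
    have := hf.1.continuous
    fun_prop
  obtain ⟨α, -, hα⟩ := exists_twistedDifferential_eq hf
    (fun x => (hcont.integral_hasStrictDerivAt 0 x).hasDerivAt)
    (hasRapidDecay_exp_smul_intervalIntegral (hf.1.differentiable (by simp)) h β)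
  exact ⟨α, hα⟩

lemma integrable_exp_neg_smul_schwartzMap (hf : Differentiable ℝ f)
    (h : ∀ᶠ x in cocompact ℝ, 0 ≤ x * deriv f x) (β : 𝓢(ℝ, E)) :
    Integrable fun t => Real.exp (-f t) • β t := by
  obtain ⟨C, hC⟩ := exists_exp_neg_le_of_mul_deriv_nonneg hf h
  have hcont : Continuous fun t => Real.exp (-f t) := by
    have := hf.continuous
    fun_prop
  exact β.integrable.bdd_smul C hcont.aestronglyMeasurable (.of_forall fun t => by simpa using hC t)

lemma twistedDifferential_injective (hf : f.HasTemperateGrowth)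
    (h : ∀ᶠ x in cocompact ℝ, 0 ≤ x * deriv f x) :
    Function.Injective (twistedDifferential f : 𝓢(ℝ, E) → 𝓢(ℝ, E)) := by
  refine (injective_iff_map_eq_zero _).2 fun α hα => ?_
  obtain ⟨c, hc⟩ := (twistedDifferential_eq_zero_iff hf).1 hα
  obtain ⟨C, hC⟩ := exists_exp_neg_le_of_mul_deriv_nonneg (hf.1.differentiable (by simp)) h
  have hbound : ∀ x, ‖c‖ ≤ C * ‖α x‖ := fun x =>
    calc ‖c‖ = Real.exp (-f x) * ‖α x‖ := by
          rw [hc, norm_smul, Real.norm_of_nonneg (Real.exp_pos _).le, ← mul_assoc,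
            ← Real.exp_add, neg_add_cancel, Real.exp_zero, one_mul]
      _ ≤ C * ‖α x‖ := by gcongr; exact hC x
  have hlim : Tendsto (fun x => C * ‖α x‖) (cocompact ℝ) (𝓝 0) := by
    simpa using α.tendsto_cocompact.norm.const_mul C
  have hc0 : c = 0 := norm_le_zero_iff.1 (ge_of_tendsto' hlim hbound)
  ext x
  simp [hc, hc0]

lemma integral_exp_neg_smul_twistedDifferential (hf : f.HasTemperateGrowth)
    (h : ∀ᶠ x in cocompact ℝ, 0 ≤ x * deriv f x) (α : 𝓢(ℝ, E)) :
    ∫ t, Real.exp (-f t) • twistedDifferential f α t = 0 := by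
  have hint := fun β : 𝓢(ℝ, E) =>
    integrable_exp_neg_smul_schwartzMap (hf.1.differentiable (by simp)) h β
  exact integral_eq_zero_of_hasDerivAt_of_integrable (hasDerivAt_exp_neg_smul_schwartzMap hf α)
    (hint _) (hint α)

lemma hasRapidDecay_exp_smul_setIntegral_Iic (hf : Differentiable ℝ f)
    (h : ∀ᶠ x in cocompact ℝ, 0 ≤ x * deriv f x) {β : 𝓢(ℝ, E)}
    (hβ : ∫ t, Real.exp (-f t) • β t = 0) :
    HasRapidDecay fun x => Real.exp (f x) • ∫ t in Set.Iic x, Real.exp (-f t) • β t := fun k => by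
  obtain ⟨C, hC0, hC⟩ := exists_weight_mul_exp_le_of_mul_deriv_nonneg hf h
  have hint := integrable_exp_neg_smul_schwartzMap hf h β
  have hset : ∀ x (S : Set ℝ), MeasurableSet S → (∀ t ∈ S, x ∈ Set.uIcc 0 t) →
      (1 + x ^ 2) ^ k * ‖Real.exp (f x) • ∫ t in S, Real.exp (-f t) • β t‖
        ≤ C * ∫ t, (1 + t ^ 2) ^ k * ‖β t‖ := fun x S hS hxS =>
    weight_mul_norm_exp_smul_setIntegral_le (w := fun t => (1 + t ^ 2) ^ k)
      (fun t => by positivity) hC0 (integrable_weight_mul_norm_schwartzMap β k) hS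
      fun t ht => hC k t x (hxS t ht)
  refine ⟨C * ∫ t, (1 + t ^ 2) ^ k * ‖β t‖, fun x => ?_⟩
  beta_reduce
  rcases le_total 0 x with hx | hx
  · have hIoi : ∫ t in Set.Iic x, Real.exp (-f t) • β t
        = -∫ t in Set.Ioi x, Real.exp (-f t) • β t :=
      eq_neg_of_add_eq_zero_left <| by
        rw [intervalIntegral.integral_Iic_add_Ioi hint.integrableOn hint.integrableOn, hβ]
    rw [hIoi, smul_neg, norm_neg]
    exact hset x _ measurableSet_Ioi fun t ht => Set.mem_uIcc_of_le hx (le_of_lt ht)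
  · exact hset x _ measurableSet_Iic fun t ht => Set.mem_uIcc_of_ge ht hx

lemma mem_range_twistedDifferential_iff [CompleteSpace E] (hf : f.HasTemperateGrowth)
    (h : ∀ᶠ x in cocompact ℝ, 0 ≤ x * deriv f x) {β : 𝓢(ℝ, E)} :
    β ∈ Set.range (twistedDifferential f : 𝓢(ℝ, E) → 𝓢(ℝ, E)) ↔
      ∫ t, Real.exp (-f t) • β t = 0 := by
  constructor
  · rintro ⟨α, rfl⟩
    exact integral_exp_neg_smul_twistedDifferential hf h α
  · intro hβ
    have hdiff : Differentiable ℝ f := hf.1.differentiable (by simp)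
    have hcont : Continuous fun t => Real.exp (-f t) • β t := by
      have := hdiff.continuous
      fun_prop
    obtain ⟨α, -, hα⟩ := exists_twistedDifferential_eq hf
      (hasDerivAt_setIntegral_Iic hcont (integrable_exp_neg_smul_schwartzMap hdiff h β))
      (hasRapidDecay_exp_smul_setIntegral_Iic hdiff h hβ)
    exact ⟨α, hα⟩

lemma exists_integral_exp_neg_smul_eq [CompleteSpace E] (hf : ContDiff ℝ ∞ f) (c : E) :
    ∃ β : 𝓢(ℝ, E), ∫ t, Real.exp (-f t) • β t = c := by
  let φ : ContDiffBump (0 : ℝ) := default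
  have hsupp : HasCompactSupport fun t => φ.normed volume t • Real.exp (f t) • c :=
    φ.hasCompactSupport_normed.smul_right
  have hsmooth : ContDiff ℝ ∞ fun t => φ.normed volume t • Real.exp (f t) • c :=
    φ.contDiff_normed.smul (hf.exp.smul contDiff_const)
  refine ⟨hsupp.toSchwartzMap hsmooth, ?_⟩
  have hcancel : ∀ t, Real.exp (-f t) • hsupp.toSchwartzMap hsmooth t = φ.normed volume t • c :=
    fun t => by
      rw [HasCompactSupport.toSchwartzMap_toFun, smul_comm, smul_smul (Real.exp _),
        ← Real.exp_add, neg_add_cancel, Real.exp_zero, one_smul]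
  simp only [hcancel, φ.integral_normed_smul]

end TwistedDifferential

section Quadratic

variable {τ σ κ : ℝ} {f : ℝ → ℝ}

lemma hasTemperateGrowth_quadratic (hf : ∀ x, f x = τ / 2 * x ^ 2 + σ * x + κ) :
    f.HasTemperateGrowth := by
  rw [funext hf]
  fun_prop

lemma deriv_quadratic (hf : ∀ x, f x = τ / 2 * x ^ 2 + σ * x + κ) (x : ℝ) :
    deriv f x = τ * x + σ := by
  rw [funext hf]
  refine ((((hasDerivAt_pow 2 x).const_mul (τ / 2)).fun_add
    ((hasDerivAt_id x).const_mul σ)).add_const κ).deriv.trans ?_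
  norm_num
  ring

lemma tendsto_mul_affine_cocompact_atTop (hτ : 0 < τ) (σ : ℝ) :
    Tendsto (fun x => x * (τ * x + σ)) (cocompact ℝ) atTop := by
  have habs : Tendsto (fun x : ℝ => |x|) (cocompact ℝ) atTop := tendsto_norm_cocompact_atTop
  refine tendsto_atTop_mono (fun x => ?_) <| habs.atTop_mul_atTop₀ <|
    tendsto_atTop_add_const_right _ (-|σ|) (habs.const_mul_atTop hτ)
  have hlower : -(|x| * |σ|) ≤ x * σ := by
    rw [← abs_mul]
    exact neg_abs_le _
  nlinarith [abs_mul_abs_self x]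

lemma tendsto_mul_affine_cocompact_atBot (hτ : τ < 0) (σ : ℝ) :
    Tendsto (fun x => x * (τ * x + σ)) (cocompact ℝ) atBot := by
  refine (tendsto_neg_atTop_atBot.comp
    (tendsto_mul_affine_cocompact_atTop (neg_pos.2 hτ) (-σ))).congr fun x => ?_
  simp only [Function.comp_apply]
  ring

end Quadratic

theorem twisted_complex_cohomology_general {E : Type*} [NormedAddCommGroup E] [NormedSpace ℝ E]
    [CompleteSpace E] {f : ℝ → ℝ} (hf : f.HasTemperateGrowth) :
    (Tendsto (fun x => x * deriv f x) (cocompact ℝ) atBot →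
      (∃ g : 𝓢(ℝ, ℝ), ∀ x, g x = Real.exp (f x)) ∧
      (∀ α : 𝓢(ℝ, E), (∀ x, deriv α x - deriv f x • α x = 0) ↔
        ∃ c : E, ∀ x, α x = Real.exp (f x) • c) ∧
      (∀ β : 𝓢(ℝ, E), ∃ α : 𝓢(ℝ, E), ∀ x, deriv α x - deriv f x • α x = β x)) ∧
    ((∀ᶠ x in cocompact ℝ, 0 ≤ x * deriv f x) →
      (∀ α₁ α₂ : 𝓢(ℝ, E),
        (∀ x, deriv α₁ x - deriv f x • α₁ x = deriv α₂ x - deriv f x • α₂ x) → α₁ = α₂) ∧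
      (∀ β : 𝓢(ℝ, E), (∃ α : 𝓢(ℝ, E), ∀ x, deriv α x - deriv f x • α x = β x) ↔
        ∫ t, Real.exp (-f t) • β t = 0) ∧
      (∀ c : E, ∃ β : 𝓢(ℝ, E), ∫ t, Real.exp (-f t) • β t = c)) := by
  simp only [← twistedDifferential_apply hf, ← SchwartzMap.ext_iff]
  refine ⟨fun h => ⟨exists_schwartzMap_eq_exp hf h, fun α => ?_,
    twistedDifferential_surjective hf h⟩, fun h => ⟨fun _ _ heq =>
      twistedDifferential_injective hf h heq, fun _ => mem_range_twistedDifferential_iff hf h,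
      exists_integral_exp_neg_smul_eq hf.1⟩⟩
  exact SchwartzMap.ext_iff.symm.trans (twistedDifferential_eq_zero_iff hf)

/-- For the quadratic `f(x) = (τ/2)x² + σx + κ` with `τ ≠ 0` and the twisted
differential `d_f(α) = α′ − f′·α` on Schwartz space (`f′ x = τ·x + σ`):
if `τ < 0`, the Gaussian `e^f` is Schwartz, the kernel of `d_f` is exactly `ℝ·e^f`,
and `d_f` is surjective; if `τ > 0`, `d_f` is injective and its range is exactly
`{β : ∫ e^{−f}·β = 0}`, the functional `β ↦ ∫ e^{−f}·β` being moreover surjective onto ℝ,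
so the quotient `𝒮 / range(d_f)` is one-dimensional. Hence the two-term complex
`0 → 𝒮 → 𝒮 → 0` has one-dimensional total cohomology, concentrated in degree 0 when
`τ < 0` and in degree 1 when `τ > 0`. -/
theorem twisted_complex_cohomology (τ σ κ : ℝ) (hτ : τ ≠ 0) (f : ℝ → ℝ)
    (hf : ∀ x, f x = τ / 2 * x ^ 2 + σ * x + κ) :
    (τ < 0 →
      (∃ g : SchwartzMap ℝ ℝ, ∀ x : ℝ, g x = Real.exp (f x)) ∧
      (∀ α : SchwartzMap ℝ ℝ,
        (∀ x : ℝ, deriv (⇑α) x - (τ * x + σ) * α x = 0) ↔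
          ∃ c : ℝ, ∀ x : ℝ, α x = c * Real.exp (f x)) ∧
      (∀ β : SchwartzMap ℝ ℝ, ∃ α : SchwartzMap ℝ ℝ,
        ∀ x : ℝ, deriv (⇑α) x - (τ * x + σ) * α x = β x)) ∧
    (0 < τ →
      (∀ α₁ α₂ : SchwartzMap ℝ ℝ,
        (∀ x : ℝ, deriv (⇑α₁) x - (τ * x + σ) * α₁ x
            = deriv (⇑α₂) x - (τ * x + σ) * α₂ x) → α₁ = α₂) ∧
      (∀ β : SchwartzMap ℝ ℝ,
        (∃ α : SchwartzMap ℝ ℝ,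
          ∀ x : ℝ, deriv (⇑α) x - (τ * x + σ) * α x = β x) ↔
          (∫ t : ℝ, Real.exp (-(f t)) * β t) = 0) ∧
      (∀ r : ℝ, ∃ β : SchwartzMap ℝ ℝ,
        (∫ t : ℝ, Real.exp (-(f t)) * β t) = r)) := by
  obtain ⟨hneg, hpos⟩ :=
    twisted_complex_cohomology_general (E := ℝ) (hasTemperateGrowth_quadratic hf)
  simp only [deriv_quadratic hf, smul_eq_mul, mul_comm (Real.exp _)] at hneg hpos ⊢
  exact ⟨fun h => hneg (tendsto_mul_affine_cocompact_atBot h σ), fun h =>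
    hpos ((tendsto_mul_affine_cocompact_atTop h σ).eventually_ge_atTop 0)⟩
end

section
/- Let L_a, L_b, L_c be three lines in ℝ² with slopes t_a < t_b < t_c that do not all pass through one point. Let A denote the area of the triangle with vertices v_{ab}, v_{bc}, v_{ac} (the 2-dimensional Lebesgue measure of the convex hull of these three points). Then A = f_{ab}(x_{ab}) + f_{bc}(x_{bc}) − f_{ac}(x_{ac}), and consequently, for every x ∈ ℝ, e^{f_{ab}(x) − f_{ab}(x_{ab})} · e^{f_{bc}(x) − f_{bc}(x_{bc})} = e^{−A} · e^{f_{ac}(x) − f_{ac}(x_{ac})}; i.e. the pointwise product of the normalized Gaussian generators satisfies 𝐞_{ab} · 𝐞_{bc} = e^{−A} · 𝐞_{ac}. -/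
open MeasureTheory

/-!
Since `f_{ab} + f_{bc} = f_{ac}`, the product of the generators of `ab` and `bc` is `exp (-D)` times
the generator of `ac`, where `D` is the defect of additivity of the critical values. Completing
squares at the abscissa `x_{ac}` gives
`2 D = (t_b - t_a) (x_{ac} - x_{ab})² + (t_c - t_b) (x_{ac} - x_{bc})²`.
The vertical line through `v_{ac}` cuts the triangle into two pieces, and the two summands are twice
their areas. The pieces share a vertical side of signed length `(t_b - t_a) (x_{ac} - x_{ab})` and
have total width `x_{bc} - x_{ab}`, so `2 D` is the product of these numbers, which is also the
determinant of the shoelace formula up to sign.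
-/

theorem prod_volume_region_between_cc {α : Type*} [MeasurableSpace α] (μ : Measure α) [SFinite μ]
    {f g : α → ℝ} {s : Set α} (hf : Measurable f) (hg : Measurable g) (hs : MeasurableSet s) :
    μ.prod volume {p : α × ℝ | p.1 ∈ s ∧ p.2 ∈ Set.Icc (f p.1) (g p.1)} =
      ∫⁻ x in s, ENNReal.ofReal (g x - f x) ∂μ := by
  rw [Measure.prod_apply (measurableSet_region_between_cc hf hg hs), ← lintegral_indicator hs]
  refine lintegral_congr fun x => ?_
  by_cases hx : x ∈ s
  · rw [Set.indicator_of_mem hx, ← Real.volume_Icc]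
    congr 1
    ext y
    simp [hx]
  · simp [hx]

/-- The closed right triangle with legs the unit segments of the coordinate axes, described by its
three bounding half-planes. -/
def unitTriangle : Set (ℝ × ℝ) :=
  {p | 0 ≤ p.1 ∧ 0 ≤ p.2 ∧ p.1 + p.2 ≤ 1}

theorem convex_unitTriangle : Convex ℝ unitTriangle :=
  (convex_halfSpace_ge (LinearMap.fst ℝ ℝ ℝ).isLinear 0).inter <|
    (convex_halfSpace_ge (LinearMap.snd ℝ ℝ ℝ).isLinear 0).inter
      (convex_halfSpace_le (LinearMap.fst ℝ ℝ ℝ + LinearMap.snd ℝ ℝ ℝ).isLinear 1)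

theorem convexHull_eq_unitTriangle :
    convexHull ℝ {(0, 0), (1, 0), (0, 1)} = unitTriangle := by
  refine (convexHull_min ?_ convex_unitTriangle).antisymm ?_
  · rintro p (rfl | rfl | rfl) <;> norm_num [unitTriangle]
  · rintro ⟨x, y⟩ ⟨hx, hy, hxy⟩
    have hnonneg : ∀ i, 0 ≤ ![1 - (x + y), x, y] i := by
      simpa [Fin.forall_fin_succ] using ⟨hxy, hx, hy⟩
    have hsum : ∑ i, ![1 - (x + y), x, y] i = 1 := by
      simp [Fin.sum_univ_three, add_assoc]
    have hcomb := (convex_convexHull ℝ {(0, 0), (1, 0), (0, 1)}).sum_mem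
      (z := ![((0 : ℝ), (0 : ℝ)), (1, 0), (0, 1)]) (fun i _ => hnonneg i) hsum
      fun i _ => subset_convexHull ℝ _ (by fin_cases i <;> simp)
    simpa [Fin.sum_univ_three] using hcomb

theorem volume_unitTriangle : volume unitTriangle = ENNReal.ofReal (1 / 2) := by
  have hregion :
      unitTriangle = {p : ℝ × ℝ | p.1 ∈ Set.Icc 0 1 ∧ p.2 ∈ Set.Icc 0 (1 - p.1)} := by
    ext ⟨x, y⟩
    simp only [unitTriangle, Set.mem_ofPred_eq, Set.mem_Icc]
    grind
  have hintegral : ∫ x in Set.Icc (0 : ℝ) 1, (1 - x) = 1 / 2 := by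
    rw [integral_Icc_eq_integral_Ioc, ← intervalIntegral.integral_of_le zero_le_one,
      intervalIntegral.integral_sub (by simp) (by simp), integral_id]
    norm_num
  rw [hregion, Measure.volume_eq_prod, prod_volume_region_between_cc volume measurable_const
    (by fun_prop) measurableSet_Icc, ← hintegral]
  simp only [sub_zero]
  refine (ofReal_integral_eq_lintegral_ofReal
    (continuous_const.sub continuous_id).integrableOn_Icc ?_).symm
  filter_upwards [ae_restrict_mem measurableSet_Icc] with x hx using sub_nonneg.mpr hx.2

theorem volume_convexHull_triple (p q r : ℝ × ℝ) :
    volume (convexHull ℝ {p, q, r}) =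
      ENNReal.ofReal (|(q.1 - p.1) * (r.2 - p.2) - (r.1 - p.1) * (q.2 - p.2)| / 2) := by
  let edges : ℝ × ℝ →ₗ[ℝ] ℝ × ℝ :=
    Matrix.toLin (Module.Basis.finTwoProd ℝ) (Module.Basis.finTwoProd ℝ)
      !![q.1 - p.1, r.1 - p.1; q.2 - p.2, r.2 - p.2]
  have hvertices : {p, q, r} = (p + ·) '' (edges '' {(0, 0), (1, 0), (0, 1)}) := by
    simp [Set.image_insert_eq, edges, Matrix.toLin_finTwoProd_apply, Prod.add_def]
  have hhull : convexHull ℝ {p, q, r} = (p + ·) '' (edges '' unitTriangle) := by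
    rw [hvertices, ← convexHull_eq_unitTriangle, edges.image_convexHull]
    exact convexHull_vadd p _
  rw [hhull, Set.image_add_left, measure_preimage_add, Measure.addHaar_image_linearMap,
    volume_unitTriangle, ← ENNReal.ofReal_mul (abs_nonneg _), LinearMap.det_toLin,
    Matrix.det_fin_two_of, mul_one_div]

/-- The line `y = slope * x + intercept` of the plane. -/
structure NonverticalLine where
  slope : ℝ
  intercept : ℝ

namespace NonverticalLine

/-- The ordinate of the point of the line `p` with abscissa `x`. -/
def height (p : NonverticalLine) (x : ℝ) : ℝ :=
  p.slope * x + p.intercept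

/-- The abscissa `x_{pq}` of the intersection of two lines; for parallel lines it is `0`, as
division by zero. -/
noncomputable def crossing (p q : NonverticalLine) : ℝ :=
  (q.intercept - p.intercept) / (p.slope - q.slope)

/-- The intersection point `v_{pq}` of two lines, its ordinate being read off the first one; it has
this meaning only for lines of distinct slopes. -/
noncomputable def vertex (p q : NonverticalLine) : ℝ × ℝ :=
  (p.crossing q, p.height (p.crossing q))

/-- The primitive `f_{pq}`, vanishing at `0`, of the difference of the heights of `p` and `q`. -/
noncomputable def phase (p q : NonverticalLine) (x : ℝ) : ℝ :=
  (p.slope - q.slope) / 2 * x ^ 2 + (p.intercept - q.intercept) * x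

/-- The value of `f_{pq}` at its critical point `x_{pq}`. -/
noncomputable def criticalPhase (p q : NonverticalLine) : ℝ :=
  p.phase q (p.crossing q)

/-- The normalized Gaussian generator `𝐞_{pq}`, which takes the value `1` at `x_{pq}`. -/
noncomputable def gaussianGenerator (p q : NonverticalLine) (x : ℝ) : ℝ :=
  Real.exp (p.phase q x - p.criticalPhase q)

/-- The failure of the critical values of the phases of three lines to be additive. -/
noncomputable def phaseDefect (a b c : NonverticalLine) : ℝ :=
  a.criticalPhase b + b.criticalPhase c - a.criticalPhase c

variable {a b c p q : NonverticalLine}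

theorem phase_add_phase (a b c : NonverticalLine) (x : ℝ) :
    a.phase b x + b.phase c x = a.phase c x := by
  simp only [phase]
  ring

theorem gaussianGenerator_mul_gaussianGenerator (a b c : NonverticalLine) (x : ℝ) :
    a.gaussianGenerator b x * b.gaussianGenerator c x =
      Real.exp (-a.phaseDefect b c) * a.gaussianGenerator c x := by
  simp only [gaussianGenerator, phaseDefect, ← Real.exp_add]
  congr 1
  linear_combination phase_add_phase a b c x

theorem height_sub_height (h : p.slope ≠ q.slope) (x : ℝ) :
    p.height x - q.height x = (p.slope - q.slope) * (x - p.crossing q) := by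
  have hne := sub_ne_zero.mpr h
  simp only [height, crossing]
  field_simp
  ring

theorem height_crossing (h : p.slope ≠ q.slope) :
    p.height (p.crossing q) = q.height (p.crossing q) := by
  rw [← sub_eq_zero, height_sub_height h, sub_self, mul_zero]

theorem phase_eq_criticalPhase_add_sq (h : p.slope ≠ q.slope) (x : ℝ) :
    p.phase q x = p.criticalPhase q + (p.slope - q.slope) / 2 * (x - p.crossing q) ^ 2 := by
  have hne := sub_ne_zero.mpr h
  simp only [phase, criticalPhase, crossing]
  field_simp
  ring

theorem phaseDefect_eq_add_sq (hab : a.slope ≠ b.slope) (hbc : b.slope ≠ c.slope) :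
    a.phaseDefect b c =
      (b.slope - a.slope) / 2 * (a.crossing c - a.crossing b) ^ 2 +
        (c.slope - b.slope) / 2 * (a.crossing c - b.crossing c) ^ 2 := by
  have hcocycle : a.phase b (a.crossing c) + b.phase c (a.crossing c) = a.criticalPhase c :=
    phase_add_phase a b c (a.crossing c)
  rw [phaseDefect]
  linear_combination hcocycle - phase_eq_criticalPhase_add_sq hab (a.crossing c) -
    phase_eq_criticalPhase_add_sq hbc (a.crossing c)

theorem phaseDefect_nonneg (hab : a.slope < b.slope) (hbc : b.slope < c.slope) :
    0 ≤ a.phaseDefect b c := by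
  rw [phaseDefect_eq_add_sq hab.ne hbc.ne]
  exact add_nonneg (mul_nonneg (half_pos (sub_pos.mpr hab)).le (sq_nonneg _))
    (mul_nonneg (half_pos (sub_pos.mpr hbc)).le (sq_nonneg _))

/-- Both sides are the signed length of the vertical segment from `v_{ac}` to the line `b`. -/
theorem slope_sub_mul_crossing_sub (hab : a.slope ≠ b.slope) (hbc : b.slope ≠ c.slope)
    (hac : a.slope ≠ c.slope) :
    (b.slope - a.slope) * (a.crossing c - a.crossing b) =
      (c.slope - b.slope) * (b.crossing c - a.crossing c) := by
  linear_combination height_sub_height hbc (a.crossing c) +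
    height_sub_height hab (a.crossing c) - height_crossing hac

theorem two_mul_phaseDefect (hab : a.slope ≠ b.slope) (hbc : b.slope ≠ c.slope)
    (hac : a.slope ≠ c.slope) :
    2 * a.phaseDefect b c =
      (b.slope - a.slope) * (a.crossing c - a.crossing b) * (b.crossing c - a.crossing b) := by
  rw [phaseDefect_eq_add_sq hab hbc]
  linear_combination
    (a.crossing c - b.crossing c) * slope_sub_mul_crossing_sub hab hbc hac

theorem volume_convexHull_vertices (hab : a.slope ≠ b.slope) (hbc : b.slope ≠ c.slope)
    (hac : a.slope ≠ c.slope) :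
    volume (convexHull ℝ {a.vertex b, b.vertex c, a.vertex c}) =
      ENNReal.ofReal |a.phaseDefect b c| := by
  have hside : b.height (b.crossing c) - a.height (a.crossing b) =
      b.slope * (b.crossing c - a.crossing b) := by
    rw [height_crossing hab]
    simp only [height]
    ring
  have hdet : (b.crossing c - a.crossing b) * (a.height (a.crossing c) - a.height (a.crossing b)) -
      (a.crossing c - a.crossing b) * (b.height (b.crossing c) - a.height (a.crossing b)) =
        -(2 * a.phaseDefect b c) := by
    rw [two_mul_phaseDefect hab hbc hac, hside]
    simp only [height]
    ring
  simp only [volume_convexHull_triple, vertex]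
  rw [hdet, abs_neg, abs_mul, abs_two, mul_div_cancel_left₀ _ two_ne_zero]

theorem toReal_volume_convexHull_vertices (hab : a.slope < b.slope) (hbc : b.slope < c.slope) :
    (volume (convexHull ℝ {a.vertex b, b.vertex c, a.vertex c})).toReal = a.phaseDefect b c := by
  have hnonneg := phaseDefect_nonneg hab hbc
  rw [volume_convexHull_vertices hab.ne hbc.ne (hab.trans hbc).ne, abs_of_nonneg hnonneg,
    ENNReal.toReal_ofReal hnonneg]

end NonverticalLine

/-- For three lines `L_p : y = t_p·x + s_p` with slopes `ta < tb < tc`,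
not all through one point, the area `A` of the triangle with vertices the pairwise
intersection points equals `fab(xab) + fbc(xbc) − fac(xac)`, and consequently the
normalized Gaussian generators satisfy `𝐞_{ab} · 𝐞_{bc} = e^{−A} · 𝐞_{ac}` pointwise. -/
theorem triangle_area_gaussian_product (ta tb tc sa sb sc : ℝ)
    (hab : ta < tb) (hbc : tb < tc)
    (hnc : ¬ ∃ x : ℝ, ta * x + sa = tb * x + sb ∧ tb * x + sb = tc * x + sc) :
    let fab : ℝ → ℝ := fun x => (ta - tb) / 2 * x ^ 2 + (sa - sb) * x
    let fbc : ℝ → ℝ := fun x => (tb - tc) / 2 * x ^ 2 + (sb - sc) * x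
    let fac : ℝ → ℝ := fun x => (ta - tc) / 2 * x ^ 2 + (sa - sc) * x
    let xab : ℝ := (sb - sa) / (ta - tb)
    let xbc : ℝ := (sc - sb) / (tb - tc)
    let xac : ℝ := (sc - sa) / (ta - tc)
    let vab : ℝ × ℝ := (xab, ta * xab + sa)
    let vbc : ℝ × ℝ := (xbc, tb * xbc + sb)
    let vac : ℝ × ℝ := (xac, ta * xac + sa)
    let A : ℝ := (volume (convexHull ℝ ({vab, vbc, vac} : Set (ℝ × ℝ)))).toReal
    A = fab xab + fbc xbc - fac xac ∧
      ∀ x : ℝ,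
        Real.exp (fab x - fab xab) * Real.exp (fbc x - fbc xbc)
          = Real.exp (-A) * Real.exp (fac x - fac xac) := by
  intro fab fbc fac xab xbc xac vab vbc vac A
  let a : NonverticalLine := ⟨ta, sa⟩
  let b : NonverticalLine := ⟨tb, sb⟩
  let c : NonverticalLine := ⟨tc, sc⟩
  have hA : A = a.phaseDefect b c :=
    NonverticalLine.toReal_volume_convexHull_vertices (a := a) (b := b) (c := c) hab hbc
  refine ⟨hA, fun x => ?_⟩
  rw [hA]
  exact NonverticalLine.gaussianGenerator_mul_gaussianGenerator a b c x
end

section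
/- Let m ≥ 3 and let w₁, …, w_m ∈ ℝ² be points in strictly convex position in clockwise order, with indices read cyclically mod m, and assume no edge of the polygon is vertical: the x-coordinates of w_i and w_{i+1} differ for every i. Then there is a unique index p such that x(w_p) is strictly smaller than x(w_j) for all j ≠ p, and a unique index q such that x(w_q) is strictly larger than x(w_j) for all j ≠ q; p ≠ q; and for every index i, slope(w_i − w_{i−1}) < slope(w_{i+1} − w_i) holds if and only if i ∈ {p, q}. In particular, exactly two vertices of a clockwise convex polygon satisfy the slope-ascent condition, and they are the x-extremal vertices. -/
/-!
At a vertex, the interior angle of a convex polygon is a cone containing all the other vertices. If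
both neighbours lie to the right of the vertex then so does the cone, hence a local strict minimum
of the `x`-coordinate is the global one; the half-turn `w ↦ -w` gives the same for maxima. Since the
polygon turns clockwise at every vertex, the slope increases there exactly when the horizontal
direction of travel reverses, that is, at a local extremum of the `x`-coordinate.
-/

/-- The determinant `u₁v₂ - u₂v₁` of two vectors of the plane: it is negative when the turn from `u`
to `v` is clockwise. -/
def pairDet {R : Type*} [CommRing R] (u v : R × R) : R :=
  u.1 * v.2 - u.2 * v.1

section PairDet

variable {R : Type*} [CommRing R]

theorem pairDet_neg_neg (u v : R × R) : pairDet (-u) (-v) = pairDet u v := by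
  simp [pairDet]

theorem pairDet_sub_rotate (a b c : R × R) :
    pairDet (b - a) (c - a) = pairDet (c - b) (a - b) := by
  simp only [pairDet, Prod.fst_sub, Prod.snd_sub]
  ring

theorem pairDet_sub_sub_eq (a b c : R × R) :
    pairDet (b - a) (c - b) = pairDet (b - a) (c - a) := by
  simp only [pairDet, Prod.fst_sub, Prod.snd_sub]
  ring

theorem pairDet_mul_fst (u v x : R × R) :
    pairDet u v * x.1 = pairDet x v * u.1 + pairDet u x * v.1 := by
  simp only [pairDet]
  ring

/-- By Cramer's rule the determinant conditions put `x` in the open cone spanned by `u` and `v`. -/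
theorem fst_pos_of_pairDet_neg [LinearOrder R] [IsStrictOrderedRing R] {u v x : R × R}
    (huv : pairDet u v < 0) (hux : pairDet u x < 0) (hxv : pairDet x v < 0)
    (hu : 0 < u.1) (hv : 0 < v.1) : 0 < x.1 := by
  have hcramer : pairDet u v * x.1 < 0 := by
    rw [pairDet_mul_fst]
    exact add_neg (mul_neg_of_neg_of_pos hxv hu) (mul_neg_of_neg_of_pos hux hv)
  exact pos_of_mul_neg_right hcramer huv.le

end PairDet

theorem slope_lt_slope_iff_mul_fst_neg {K : Type*} [Field K] [LinearOrder K]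
    [IsStrictOrderedRing K] {u v : K × K} (hu : u.1 ≠ 0) (hv : v.1 ≠ 0)
    (huv : pairDet u v < 0) : u.2 / u.1 < v.2 / v.1 ↔ u.1 * v.1 < 0 := by
  have hsub : v.2 / v.1 - u.2 / u.1 = pairDet u v / (u.1 * v.1) := by
    rw [div_sub_div _ _ hv hu, pairDet]
    ring
  rw [← sub_pos, hsub, div_pos_iff]
  simp [huv, huv.not_gt]

section CyclicIndices

variable {m : ℕ} [NeZero m]

theorem sbtw_self_add_one {i j : Fin m} (hj : j ≠ i) (hj' : j ≠ i + 1) : sbtw i (i + 1) j := by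
  obtain _ | m := m
  · exact i.elim0
  have hval : (i + 1).val = if i = Fin.last m then 0 else i.val + 1 := Fin.val_add_one i
  simp only [Fin.sbtw_iff, Fin.lt_def, ne_eq, Fin.ext_iff, Fin.val_last] at *
  split at hval <;> omega

theorem sbtw_sub_one_self {i j : Fin m} (hj : j ≠ i) (hj' : j ≠ i - 1) : sbtw (i - 1) i j := by
  simpa using sbtw_self_add_one (i := i - 1) hj' (by simpa using hj)

theorem fin_add_one_ne_self (hm : 2 ≤ m) (i : Fin m) : i + 1 ≠ i := by
  obtain ⟨n, rfl⟩ := Nat.exists_eq_add_of_le' hm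
  simp

theorem fin_sub_one_ne_self (hm : 2 ≤ m) (i : Fin m) : i - 1 ≠ i := by
  simpa using (fin_add_one_ne_self hm (i - 1)).symm

theorem fin_add_one_ne_sub_one (hm : 3 ≤ m) (i : Fin m) : i + 1 ≠ i - 1 := by
  obtain ⟨n, rfl⟩ := Nat.exists_eq_add_of_le' hm
  rw [ne_eq, eq_sub_iff_add_eq, add_assoc, add_eq_left]
  simp [Fin.ext_iff, Fin.val_add, Nat.mod_eq_of_lt]

theorem sbtw_sub_one_self_add_one (hm : 3 ≤ m) (i : Fin m) : sbtw (i - 1) i (i + 1) :=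
  sbtw_sub_one_self (fin_add_one_ne_self (by lia) i) (fin_add_one_ne_sub_one hm i)

end CyclicIndices

/-- `i` is the index of the leftmost point of the family `w`, no other point having the same first
coordinate. -/
def IsLeftmost {ι α : Type*} [LT α] (w : ι → α × α) (i : ι) : Prop :=
  ∀ j, j ≠ i → (w i).1 < (w j).1

/-- `i` is the index of the rightmost point of the family `w`, no other point having the same first
coordinate. -/
def IsRightmost {ι α : Type*} [LT α] (w : ι → α × α) (i : ι) : Prop :=
  ∀ j, j ≠ i → (w j).1 < (w i).1

section Extremal

variable {ι α : Type*}

theorem IsLeftmost.iff_eq [Preorder α] {w : ι → α × α} {p : ι} (hp : IsLeftmost w p) (i : ι) :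
    IsLeftmost w i ↔ i = p := by
  refine ⟨fun hi => ?_, fun h => h ▸ hp⟩
  by_contra hne
  exact lt_asymm (hp i hne) (hi p (Ne.symm hne))

theorem IsRightmost.iff_eq [Preorder α] {w : ι → α × α} {q : ι} (hq : IsRightmost w q) (i : ι) :
    IsRightmost w i ↔ i = q := by
  refine ⟨fun hi => ?_, fun h => h ▸ hq⟩
  by_contra hne
  exact lt_asymm (hq i hne) (hi q (Ne.symm hne))

theorem IsLeftmost.ne_of_isRightmost [Nontrivial ι] [Preorder α] {w : ι → α × α} {p q : ι}
    (hp : IsLeftmost w p) (hq : IsRightmost w q) : p ≠ q := by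
  rintro rfl
  obtain ⟨j, hj⟩ := exists_ne p
  exact lt_asymm (hp j hj) (hq j hj)

theorem isLeftmost_neg_iff [AddCommGroup α] [PartialOrder α] [IsOrderedAddMonoid α]
    {w : ι → α × α} {i : ι} : IsLeftmost (-w) i ↔ IsRightmost w i := by
  simp [IsLeftmost, IsRightmost]

end Extremal

/-- The points `w i`, listed in increasing order of the index, are the vertices of a strictly convex
polygon traversed clockwise. -/
def IsClockwiseConvex {ι R : Type*} [LT ι] [CommRing R] [LT R] (w : ι → R × R) : Prop :=
  ∀ i j k, i < j → j < k → pairDet (w j - w i) (w k - w i) < 0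

namespace IsClockwiseConvex

theorem neg {ι R : Type*} [LT ι] [CommRing R] [LT R] {w : ι → R × R}
    (hw : IsClockwiseConvex w) : IsClockwiseConvex (-w) := by
  intro i j k hij hjk
  simpa only [Pi.neg_apply, neg_sub_neg, ← neg_sub (w _) (w i), pairDet_neg_neg]
    using hw i j k hij hjk

theorem pairDet_neg_of_sbtw {m : ℕ} {R : Type*} [CommRing R] [LT R] {w : Fin m → R × R}
    (hw : IsClockwiseConvex w) {i j k : Fin m} (h : sbtw i j k) :
    pairDet (w j - w i) (w k - w i) < 0 := by
  rcases Fin.sbtw_iff.1 h with ⟨hij, hjk⟩ | ⟨hjk, hki⟩ | ⟨hki, hij⟩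
  · exact hw i j k hij hjk
  · rw [pairDet_sub_rotate]
    exact hw j k i hjk hki
  · rw [← pairDet_sub_rotate]
    exact hw k i j hki hij

section Extremal

variable {m : ℕ} [NeZero m] {R : Type*} [CommRing R] [LinearOrder R] [IsStrictOrderedRing R]
  {w : Fin m → R × R}

theorem isLeftmost_iff_lt_neighbors (hw : IsClockwiseConvex w) (hm : 3 ≤ m) {i : Fin m} :
    IsLeftmost w i ↔ (w i).1 < (w (i - 1)).1 ∧ (w i).1 < (w (i + 1)).1 := by
  refine ⟨fun h => ⟨h _ (fin_sub_one_ne_self (by lia) i), h _ (fin_add_one_ne_self (by lia) i)⟩, ?_⟩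
  rintro ⟨hpred, hsucc⟩ j hj
  by_cases hj_succ : j = i + 1
  · rwa [hj_succ]
  by_cases hj_pred : j = i - 1
  · rwa [hj_pred]
  have hcorner : sbtw i (i + 1) (i - 1) := (sbtw_sub_one_self_add_one hm i).cyclic_left
  have hedge_out : sbtw i (i + 1) j := sbtw_self_add_one hj hj_succ
  have hedge_in : sbtw i j (i - 1) := (sbtw_sub_one_self hj hj_pred).cyclic_left
  exact sub_pos.1 <| fst_pos_of_pairDet_neg (hw.pairDet_neg_of_sbtw hcorner)
    (hw.pairDet_neg_of_sbtw hedge_out) (hw.pairDet_neg_of_sbtw hedge_in)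
    (sub_pos.2 hsucc) (sub_pos.2 hpred)

theorem isRightmost_iff_neighbors_lt (hw : IsClockwiseConvex w) (hm : 3 ≤ m) {i : Fin m} :
    IsRightmost w i ↔ (w (i - 1)).1 < (w i).1 ∧ (w (i + 1)).1 < (w i).1 := by
  simpa [isLeftmost_neg_iff] using hw.neg.isLeftmost_iff_lt_neighbors hm (i := i)

theorem exists_isLeftmost (hw : IsClockwiseConvex w) (hm : 3 ≤ m)
    (hvert : ∀ i, (w (i + 1)).1 ≠ (w i).1) : ∃ p, IsLeftmost w p := by
  obtain ⟨p, hp⟩ := Finite.exists_min fun i => (w i).1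
  have hpred : (w p).1 ≠ (w (p - 1)).1 := by simpa using hvert (p - 1)
  exact ⟨p, (hw.isLeftmost_iff_lt_neighbors hm).2
    ⟨(hp _).lt_of_ne hpred, (hp _).lt_of_ne (hvert p).symm⟩⟩

theorem exists_isRightmost (hw : IsClockwiseConvex w) (hm : 3 ≤ m)
    (hvert : ∀ i, (w (i + 1)).1 ≠ (w i).1) : ∃ q, IsRightmost w q := by
  simpa [isLeftmost_neg_iff] using hw.neg.exists_isLeftmost hm (by simpa using hvert)

end Extremal

theorem slope_lt_slope_iff_isLeftmost_or_isRightmost {m : ℕ} [NeZero m] {K : Type*}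
    [Field K] [LinearOrder K] [IsStrictOrderedRing K] {w : Fin m → K × K}
    (hw : IsClockwiseConvex w) (hm : 3 ≤ m) {i : Fin m}
    (hpred : (w i).1 ≠ (w (i - 1)).1) (hsucc : (w (i + 1)).1 ≠ (w i).1) :
    ((w i).2 - (w (i - 1)).2) / ((w i).1 - (w (i - 1)).1)
        < ((w (i + 1)).2 - (w i).2) / ((w (i + 1)).1 - (w i).1)
      ↔ IsLeftmost w i ∨ IsRightmost w i := by
  have hturn : pairDet (w i - w (i - 1)) (w (i + 1) - w i) < 0 := by
    rw [pairDet_sub_sub_eq]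
    exact hw.pairDet_neg_of_sbtw (sbtw_sub_one_self_add_one hm i)
  have hslope := slope_lt_slope_iff_mul_fst_neg (sub_ne_zero.2 hpred) (sub_ne_zero.2 hsucc) hturn
  rw [hw.isLeftmost_iff_lt_neighbors hm, hw.isRightmost_iff_neighbors_lt hm, or_comm]
  simpa only [Prod.fst_sub, Prod.snd_sub, mul_neg_iff, sub_pos, sub_neg] using hslope

end IsClockwiseConvex

theorem cc_polygon_degree_count_general {m : ℕ} (hm : 3 ≤ m) [NeZero m] {K : Type*} [Field K]
    [LinearOrder K] [IsStrictOrderedRing K] {w : Fin m → K × K} (hw : IsClockwiseConvex w)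
    (hvert : ∀ i, (w (i + 1)).1 ≠ (w i).1) :
    (∃! p, IsLeftmost w p) ∧ (∃! q, IsRightmost w q) ∧
      ∀ p q, IsLeftmost w p → IsRightmost w q → p ≠ q ∧ ∀ i,
        (((w i).2 - (w (i - 1)).2) / ((w i).1 - (w (i - 1)).1)
            < ((w (i + 1)).2 - (w i).2) / ((w (i + 1)).1 - (w i).1)
          ↔ i = p ∨ i = q) := by
  obtain ⟨p₀, hp₀⟩ := hw.exists_isLeftmost hm hvert
  obtain ⟨q₀, hq₀⟩ := hw.exists_isRightmost hm hvert
  refine ⟨⟨p₀, hp₀, fun i => (hp₀.iff_eq i).1⟩, ⟨q₀, hq₀, fun i => (hq₀.iff_eq i).1⟩,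
    fun p q hp hq => ⟨?_, fun i => ?_⟩⟩
  · have : Nontrivial (Fin m) := Fin.nontrivial_iff_two_le.2 (by lia)
    exact hp.ne_of_isRightmost hq
  · have hpred : (w i).1 ≠ (w (i - 1)).1 := by simpa using hvert (i - 1)
    rw [← hp.iff_eq i, ← hq.iff_eq i]
    exact hw.slope_lt_slope_iff_isLeftmost_or_isRightmost hm hpred (hvert i)

/-- Let `w₁, …, w_m` (m ≥ 3, indices cyclic mod m) be points of ℝ² in
strictly convex position in clockwise order (`det(w_j − w_i, w_k − w_i) < 0` for
`i < j < k`), with no vertical edge. Then there is a unique index `p` with strictly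
minimal x-coordinate and a unique index `q` with strictly maximal x-coordinate,
`p ≠ q`, and for every `i` the slope-ascent condition
`slope(w_i − w_{i−1}) < slope(w_{i+1} − w_i)` holds iff `i ∈ {p, q}`. -/
theorem cc_polygon_degree_count (m : ℕ) (hm : 3 ≤ m) [NeZero m]
    (w : Fin m → ℝ × ℝ)
    (hconv : ∀ i j k : Fin m, i < j → j < k →
      (w j - w i).1 * (w k - w i).2 - (w j - w i).2 * (w k - w i).1 < 0)
    (hvert : ∀ i : Fin m, (w (i + 1)).1 ≠ (w i).1) :
    (∃! p : Fin m, ∀ j : Fin m, j ≠ p → (w p).1 < (w j).1) ∧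
    (∃! q : Fin m, ∀ j : Fin m, j ≠ q → (w j).1 < (w q).1) ∧
    (∀ p q : Fin m,
      (∀ j : Fin m, j ≠ p → (w p).1 < (w j).1) →
      (∀ j : Fin m, j ≠ q → (w j).1 < (w q).1) →
      p ≠ q ∧
        ∀ i : Fin m,
          (((w i).2 - (w (i - 1)).2) / ((w i).1 - (w (i - 1)).1)
              < ((w (i + 1)).2 - (w i).2) / ((w (i + 1)).1 - (w i).1)
            ↔ (i = p ∨ i = q))) := by
  exact cc_polygon_degree_count_general hm hconv hvert
end

section
/- Let m ≥ 3 and let L₁, …, L_m be lines L_i : y = t_i·x + s_i in ℝ² with t_i ≠ t_{i+1} for all i (indices read cyclically mod m). Let w_i denote the intersection point of L_i and L_{i+1}, let x_i be its x-coordinate, and set f_{i,i+1}(x) := ((t_i − t_{i+1})/2)·x² + (s_i − s_{i+1})·x. Assume the points w₁, …, w_m are pairwise distinct and in strictly convex position in clockwise order (so that the segment from w_{i−1} to w_i lies on L_i and they bound a clockwise convex polygon). Then the area of the polygon — the 2-dimensional Lebesgue measure of the convex hull of {w₁, …, w_m} — equals Σ_{i=1}^{m} f_{i,i+1}(x_i).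 -/
open MeasureTheory

/-!
Adding the vertices one at a time, each new vertex glues a triangle onto the hull of the previous
ones, along the edge from the first vertex to the last one so far. The areas of these triangles add
up to the shoelace formula `area = -½ ∑ wᵢ × wᵢ₊₁`, where the minus sign accounts for the clockwise
order. As `wᵢ` and `wᵢ₊₁` both lie on `Lᵢ₊₁`, one has `wᵢ × wᵢ₊₁ = sᵢ₊₁ (xᵢ - xᵢ₊₁)`; as `wᵢ` lies
on `Lᵢ` and `Lᵢ₊₁`, one has `fᵢ,ᵢ₊₁(xᵢ) = ½ (sᵢ - sᵢ₊₁) xᵢ`. Summed cyclically, these agree.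
-/

namespace PlanarPolygon

/-- The cross product `u × v` of two plane vectors, as a linear map in `v`. -/
def cross (u : ℝ × ℝ) : ℝ × ℝ →ₗ[ℝ] ℝ :=
  u.1 • LinearMap.snd ℝ ℝ ℝ - u.2 • LinearMap.fst ℝ ℝ ℝ

/-- Twice the signed area of the triangle `a b c`: positive when it is counterclockwise, and zero
when the three points are collinear. -/
def orient (a b c : ℝ × ℝ) : ℝ := cross (b - a) (c - a)

theorem cross_apply (u v : ℝ × ℝ) : cross u v = u.1 * v.2 - u.2 * v.1 := rfl

theorem cross_ne_zero {u : ℝ × ℝ} (hu : u ≠ 0) : cross u ≠ 0 := by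
  contrapose! hu
  have h₁ : cross u (1, 0) = 0 := by rw [hu, LinearMap.zero_apply]
  have h₂ : cross u (0, 1) = 0 := by rw [hu, LinearMap.zero_apply]
  simp only [cross_apply] at h₁ h₂
  ext <;> simp only [Prod.fst_zero, Prod.snd_zero] <;> linarith

theorem orient_apply (a b c : ℝ × ℝ) :
    orient a b c = (b.1 - a.1) * (c.2 - a.2) - (b.2 - a.2) * (c.1 - a.1) := rfl

theorem orient_eq_cross (a b c : ℝ × ℝ) : orient a b c = cross a b + cross b c + cross c a := by
  simp only [orient_apply, cross_apply]
  ring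

@[simp]
theorem orient_self_left (a b : ℝ × ℝ) : orient a a b = 0 := by simp [orient_apply]

theorem orient_rotate (a b c : ℝ × ℝ) : orient b c a = orient a b c := by
  simp only [orient_apply]
  ring

theorem orient_swap_left (a b c : ℝ × ℝ) : orient b a c = -orient a b c := by
  simp only [orient_apply]
  ring

theorem orient_swap_right (a b c : ℝ × ℝ) : orient a c b = -orient a b c := by
  simp only [orient_apply]
  ring

@[simp]
theorem orient_self_right (a b : ℝ × ℝ) : orient a b b = 0 := by
  rw [← orient_rotate, orient_self_left]

@[simp]
theorem orient_self_outer (a b : ℝ × ℝ) : orient a b a = 0 := by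
  rw [← orient_rotate, orient_self_right]

theorem orient_add_orient_add_orient (a b c p : ℝ × ℝ) :
    orient b c p + orient c a p + orient a b p = orient a b c := by
  simp only [orient_apply]
  ring

/-- Barycentric coordinates of `p` with respect to `a`, `b`, `c`, denominators cleared. -/
theorem orient_smul_eq (a b c p : ℝ × ℝ) :
    orient a b c • p = orient b c p • a + orient c a p • b + orient a b p • c := by
  ext <;> simp only [orient_apply, Prod.fst_add, Prod.snd_add, Prod.smul_fst, Prod.smul_snd,
    smul_eq_mul] <;> ring

theorem convex_orient_nonneg (a b : ℝ × ℝ) : Convex ℝ {p | 0 ≤ orient a b p} := by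
  simpa only [orient, map_sub, sub_nonneg] using
    convex_halfSpace_ge (cross (b - a)).isLinear (cross (b - a) a)

theorem orient_nonneg_of_mem_convexHull {S : Set (ℝ × ℝ)} {a b p : ℝ × ℝ}
    (hS : ∀ q ∈ S, 0 ≤ orient a b q) (hp : p ∈ convexHull ℝ S) : 0 ≤ orient a b p :=
  convexHull_min hS (convex_orient_nonneg a b) hp

theorem volume_setOf_orient_eq_zero {a b : ℝ × ℝ} (hab : a ≠ b) :
    volume {p | orient a b p = 0} = 0 := by
  have hker : LinearMap.ker (cross (b - a)) ≠ ⊤ := by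
    rw [Ne, LinearMap.ker_eq_top]
    exact cross_ne_zero (sub_ne_zero.2 hab.symm)
  calc volume {p | orient a b p = 0}
      = volume ((· - a) ⁻¹' (LinearMap.ker (cross (b - a)) : Set (ℝ × ℝ))) := rfl
    _ = 0 := by
      simp only [sub_eq_add_neg _ a, measure_preimage_add_right]
      exact Measure.addHaar_submodule volume _ hker

theorem volume_convexHull_eq_zero {S : Set (ℝ × ℝ)} {a b : ℝ × ℝ} (hab : a ≠ b)
    (hS : ∀ q ∈ S, orient a b q = 0) : volume (convexHull ℝ S) = 0 := by
  refine measure_mono_null (fun p hp => ?_) (volume_setOf_orient_eq_zero hab)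
  have hleft := orient_nonneg_of_mem_convexHull (fun q hq => (hS q hq).ge) hp
  have hright : 0 ≤ orient b a p :=
    orient_nonneg_of_mem_convexHull (fun q hq => by rw [orient_swap_left, hS q hq, neg_zero]) hp
  rw [orient_swap_left, neg_nonneg] at hright
  exact le_antisymm hright hleft

theorem mem_convexHull_triple_iff {a b c p : ℝ × ℝ} (habc : 0 < orient a b c) :
    p ∈ convexHull ℝ {a, b, c} ↔ 0 ≤ orient b c p ∧ 0 ≤ orient c a p ∧ 0 ≤ orient a b p := by
  constructor
  · intro hp
    have hbca : 0 ≤ orient b c a := by rw [orient_rotate]; exact habc.le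
    have hcab : 0 ≤ orient c a b := by rw [orient_rotate]; exact hbca
    refine ⟨orient_nonneg_of_mem_convexHull ?_ hp, orient_nonneg_of_mem_convexHull ?_ hp,
      orient_nonneg_of_mem_convexHull ?_ hp⟩ <;> simp [hbca, hcab, habc.le]
  · rintro ⟨ha, hb, hc⟩
    let weight : Fin 3 → ℝ := ![orient b c p, orient c a p, orient a b p]
    have hsum : ∑ i, weight i = orient a b c := by
      simpa [weight, Fin.sum_univ_three] using orient_add_orient_add_orient a b c p
    have hmem : Finset.univ.centerMass weight ![a, b, c] ∈ convexHull ℝ {a, b, c} := by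
      refine Finset.centerMass_mem_convexHull _ ?_ (by rwa [hsum]) ?_ <;>
        intro i _ <;> fin_cases i <;> simp [weight, ha, hb, hc]
    have hp : Finset.univ.centerMass weight ![a, b, c] = p := by
      rw [Finset.centerMass, hsum, inv_smul_eq_iff₀ habc.ne', orient_smul_eq]
      simp [weight, Fin.sum_univ_three]
    rwa [hp] at hmem

theorem measurableSet_convexHull_triple (a b c : ℝ × ℝ) :
    MeasurableSet (convexHull ℝ {a, b, c}) :=
  ((Set.toFinite {a, b, c}).isCompact_convexHull ℝ).measurableSet

theorem mem_convexHull_standard_triple_iff {p : ℝ × ℝ} :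
    p ∈ convexHull ℝ {((0 : ℝ), (0 : ℝ)), (1, 0), (0, 1)} ↔ 0 ≤ p.1 ∧ 0 ≤ p.2 ∧ p.1 + p.2 ≤ 1 := by
  have h₁ : orient (1, 0) (0, 1) p = 1 - (p.1 + p.2) := by simp only [orient_apply]; ring
  have h₂ : orient (0, 1) (0, 0) p = p.1 := by simp only [orient_apply]; ring
  have h₃ : orient (0, 0) (1, 0) p = p.2 := by simp only [orient_apply]; ring
  rw [mem_convexHull_triple_iff (by simp [orient_apply]), h₁, h₂, h₃, sub_nonneg, and_rotate]

-- The diagonal from `(1, 0)` to `(0, 1)` cuts the unit square into two congruent triangles.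
theorem volume_convexHull_standard_triple :
    volume (convexHull ℝ {((0 : ℝ), (0 : ℝ)), (1, 0), (0, 1)}) = 1 / 2 := by
  set T : Set (ℝ × ℝ) := convexHull ℝ {(0, 0), (1, 0), (0, 1)}
  have hmem (p : ℝ × ℝ) : p ∈ T ↔ 0 ≤ p.1 ∧ 0 ≤ p.2 ∧ p.1 + p.2 ≤ 1 :=
    mem_convexHull_standard_triple_iff
  have hsquare : Set.Icc (0 : ℝ × ℝ) 1 = T ∪ ((1 : ℝ × ℝ) - ·) ⁻¹' T := by
    ext p
    simp only [Set.mem_union, Set.mem_preimage, hmem, Set.mem_Icc, Prod.le_def, Prod.fst_zero,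
      Prod.snd_zero, Prod.fst_one, Prod.snd_one, Prod.fst_sub, Prod.snd_sub]
    grind
  have hdisj : AEDisjoint volume T (((1 : ℝ × ℝ) - ·) ⁻¹' T) := by
    refine measure_mono_null (fun p ⟨hp, hp'⟩ => ?_)
      (volume_setOf_orient_eq_zero (a := (1, 0)) (b := (0, 1)) (by simp))
    simp only [Set.mem_preimage, hmem, Prod.fst_sub, Prod.snd_sub, Prod.fst_one, Prod.snd_one]
      at hp hp'
    simp only [Set.mem_ofPred_eq, orient_apply]
    linarith
  have hmeas : MeasurableSet T := measurableSet_convexHull_triple _ _ _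
  have htwo : (1 : ENNReal) = volume T + volume T := by
    have hpre : MeasurePreserving ((1 : ℝ × ℝ) - ·) := volume.measurePreserving_sub_left 1
    calc (1 : ENNReal) = volume (Set.Icc (0 : ℝ × ℝ) 1) := by
          rw [Measure.volume_eq_prod, ← Prod.mk_zero_zero, ← Prod.mk_one_one, Set.Icc_prod_eq,
            Measure.prod_prod]
          simp
      _ = volume T + volume (((1 : ℝ × ℝ) - ·) ⁻¹' T) := by
          rw [hsquare, measure_union₀ (hpre.measurable hmeas).nullMeasurableSet hdisj]
      _ = volume T + volume T := by rw [hpre.measure_preimage hmeas.nullMeasurableSet]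
  rw [ENNReal.eq_div_iff two_ne_zero ENNReal.ofNat_ne_top, two_mul, ← htwo]

open scoped Pointwise in
theorem volume_convexHull_triple (a b c : ℝ × ℝ) :
    volume (convexHull ℝ {a, b, c}) = ENNReal.ofReal (|orient a b c| / 2) := by
  let L : ℝ × ℝ →ₗ[ℝ] ℝ × ℝ := Matrix.toLin (.finTwoProd ℝ) (.finTwoProd ℝ)
    !![(b - a).1, (c - a).1; (b - a).2, (c - a).2]
  have hdet : LinearMap.det L = orient a b c := by
    rw [LinearMap.det_toLin, Matrix.det_fin_two_of, orient, cross_apply]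
    ring
  have hvertices : {a, b, c} = a +ᵥ L '' {(0, 0), (1, 0), (0, 1)} := by
    simp [L, Set.image_insert_eq, Matrix.toLin_finTwoProd_apply, Set.vadd_set_insert,
      -Prod.fst_sub, -Prod.snd_sub, Prod.mk_zero_zero]
  rw [hvertices, convexHull_vadd, measure_vadd, ← L.image_convexHull,
    Measure.addHaar_image_linearMap, hdet, volume_convexHull_standard_triple,
    ENNReal.ofReal_div_of_pos two_pos, ENNReal.ofReal_ofNat, mul_one_div]

/-- A point of the segment from `p` to a point `q` of the hull of `S` lies in the triangle `a p b`
or in the triangle `a b q`, depending on its side of the line `a b`. -/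
theorem convexHull_insert_eq_union {S : Set (ℝ × ℝ)} {a b p : ℝ × ℝ} (ha : a ∈ S) (hb : b ∈ S)
    (hapb : 0 < orient a p b) (hap : ∀ q ∈ S, 0 ≤ orient a p q)
    (hpb : ∀ q ∈ S, 0 ≤ orient p b q) :
    convexHull ℝ (insert p S) = convexHull ℝ S ∪ convexHull ℝ {a, p, b} := by
  apply Set.Subset.antisymm
  · rw [convexHull_insert ⟨a, ha⟩]
    intro z hz
    obtain ⟨q, hq, hzq⟩ : ∃ q ∈ convexHull ℝ S, z ∈ segment ℝ p q := by
      simpa [mem_convexJoin] using hz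
    have hz_nonneg {c d : ℝ × ℝ} (hp : 0 ≤ orient c d p) (hq : 0 ≤ orient c d q) :
        0 ≤ orient c d z := (convex_orient_nonneg c d).segment_subset hp hq hzq
    have hapq := orient_nonneg_of_mem_convexHull hap hq
    have hpbq := orient_nonneg_of_mem_convexHull hpb hq
    rcases le_or_gt 0 (orient b a z) with hside | hside
    · refine .inr ((mem_convexHull_triple_iff hapb).2 ⟨?_, hside, ?_⟩)
      · exact hz_nonneg (by simp) hpbq
      · exact hz_nonneg (by simp) hapq
    · have habq : 0 < orient a b q := by
        rw [← neg_neg (orient a b q), ← orient_swap_left, neg_pos]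
        contrapose! hside
        exact hz_nonneg (by rw [← orient_rotate]; exact hapb.le) hside
      refine .inl (convexHull_min ?_ (convex_convexHull ℝ S)
        ((mem_convexHull_triple_iff habq).2 ⟨?_, ?_, ?_⟩))
      · rintro r (rfl | rfl | rfl)
        exacts [subset_convexHull ℝ S ha, subset_convexHull ℝ S hb, hq]
      · exact hz_nonneg (by rwa [orient_rotate]) (by simp)
      · exact hz_nonneg (by rwa [← orient_rotate]) (by simp)
      · rw [orient_swap_left]
        exact neg_nonneg.2 hside.le
  · refine Set.union_subset (convexHull_mono (Set.subset_insert p S)) (convexHull_mono ?_)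
    rintro q (rfl | rfl | rfl)
    exacts [.inr ha, .inl rfl, .inr hb]

theorem volume_convexHull_insert_of_orient_eq_zero {S : Set (ℝ × ℝ)} {a b p : ℝ × ℝ}
    (ha : a ∈ S) (hb : b ∈ S) (hapb : orient a p b = 0) (hab : ∀ q ∈ S, 0 ≤ orient a b q)
    (hap : ∀ q ∈ S, 0 ≤ orient a p q) (hpb : ∀ q ∈ S, 0 ≤ orient p b q) :
    volume (convexHull ℝ (insert p S)) = volume (convexHull ℝ S) := by
  have habp : orient a b p = 0 := by rw [orient_swap_right, hapb, neg_zero]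
  -- Unless `S` is collinear, the point `p` is in the hull of `S` already.
  by_cases hpos : ∃ q ∈ S, 0 < orient a b q
  · obtain ⟨q, hq, habq⟩ := hpos
    have hp : p ∈ convexHull ℝ {a, b, q} := (mem_convexHull_triple_iff habq).2
      ⟨by rw [orient_rotate]; exact hpb q hq, by rw [← orient_rotate]; exact hap q hq, habp.ge⟩
    have hpS : p ∈ convexHull ℝ S := convexHull_mono (by grind) hp
    congr 1
    exact (convexHull_min (Set.insert_subset hpS (subset_convexHull ℝ S))
      (convex_convexHull ℝ S)).antisymm (convexHull_mono (Set.subset_insert p S))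
  by_cases hpS : p ∈ S
  · rw [Set.insert_eq_of_mem hpS]
  obtain ⟨c, d, hcd, hline⟩ : ∃ c d, c ≠ d ∧ ∀ q ∈ insert p S, orient c d q = 0 := by
    by_cases hne : a = b
    · subst hne
      refine ⟨a, p, fun h => hpS (h ▸ ha), Set.forall_mem_insert.2 ⟨by simp, fun q hq => ?_⟩⟩
      have hpaq := hpb q hq
      rw [orient_swap_left, neg_nonneg] at hpaq
      exact hpaq.antisymm (hap q hq)
    · push Not at hpos
      exact ⟨a, b, hne, Set.forall_mem_insert.2
        ⟨habp, fun q hq => (hpos q hq).antisymm (hab q hq)⟩⟩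
  rw [volume_convexHull_eq_zero hcd hline,
    volume_convexHull_eq_zero hcd fun q hq => hline q (.inr hq)]

theorem volume_convexHull_insert {S : Set (ℝ × ℝ)} {a b p : ℝ × ℝ} (ha : a ∈ S) (hb : b ∈ S)
    (hab : ∀ q ∈ S, 0 ≤ orient a b q) (hap : ∀ q ∈ S, 0 ≤ orient a p q)
    (hpb : ∀ q ∈ S, 0 ≤ orient p b q) :
    volume (convexHull ℝ (insert p S)) =
      volume (convexHull ℝ S) + ENNReal.ofReal (orient a p b / 2) := by
  rcases (hap b hb).eq_or_lt with hapb | hapb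
  · rw [volume_convexHull_insert_of_orient_eq_zero ha hb hapb.symm hab hap hpb, ← hapb, zero_div,
      ENNReal.ofReal_zero, add_zero]
  have hne : a ≠ b := by
    rintro rfl
    simp at hapb
  have hdisj : AEDisjoint volume (convexHull ℝ S) (convexHull ℝ {a, p, b}) := by
    refine measure_mono_null (fun q ⟨hqS, hq⟩ => ?_) (volume_setOf_orient_eq_zero hne)
    have hbaq : 0 ≤ orient b a q := ((mem_convexHull_triple_iff hapb).1 hq).2.1
    rw [orient_swap_left, neg_nonneg] at hbaq
    exact hbaq.antisymm (orient_nonneg_of_mem_convexHull hab hqS)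
  rw [convexHull_insert_eq_union ha hb hapb hap hpb,
    measure_union₀ (measurableSet_convexHull_triple a p b).nullMeasurableSet hdisj,
    volume_convexHull_triple, abs_of_pos hapb]

/-- Clockwise convex position of a family of points, in the non-strict form that allows coinciding
points and three points on a line. -/
def IsClockwise {ι : Type*} [LT ι] (w : ι → ℝ × ℝ) : Prop :=
  ∀ i j k, i < j → j < k → orient (w i) (w j) (w k) ≤ 0

namespace IsClockwise

theorem comp_strictMono {ι κ : Type*} [Preorder ι] [Preorder κ] {w : κ → ℝ × ℝ}
    (hw : IsClockwise w) {f : ι → κ} (hf : StrictMono f) : IsClockwise (w ∘ f) :=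
  fun i j k hij hjk => hw (f i) (f j) (f k) (hf hij) (hf hjk)

theorem orient_nonpos {ι : Type*} [PartialOrder ι] {w : ι → ℝ × ℝ} (hw : IsClockwise w)
    {i j k : ι} (hij : i ≤ j) (hjk : j ≤ k) : orient (w i) (w j) (w k) ≤ 0 := by
  rcases hij.eq_or_lt with rfl | hij
  · simp
  rcases hjk.eq_or_lt with rfl | hjk
  · simp
  exact hw i j k hij hjk

theorem orient_nonneg {ι : Type*} [PartialOrder ι] {w : ι → ℝ × ℝ} (hw : IsClockwise w)
    {i j k : ι} (hij : i ≤ j) (hjk : j ≤ k) : 0 ≤ orient (w i) (w k) (w j) := by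
  rw [orient_swap_right, neg_nonneg]
  exact hw.orient_nonpos hij hjk

theorem volume_real_convexHull_range_succ {n : ℕ} {w : Fin (n + 2) → ℝ × ℝ}
    (hw : IsClockwise w) :
    volume.real (convexHull ℝ (Set.range w)) =
      volume.real (convexHull ℝ (Set.range (w ∘ Fin.castSucc))) +
        orient (w 0) (w (Fin.last (n + 1))) (w (Fin.last n).castSucc) / 2 := by
  have hrange : Set.range w =
      insert (w (Fin.last (n + 1))) (Set.range (w ∘ Fin.castSucc)) := by
    ext p
    simp [Fin.exists_fin_succ', or_comm, eq_comm]
  have hvolume := volume_convexHull_insert (S := Set.range (w ∘ Fin.castSucc))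
    (p := w (Fin.last (n + 1))) ⟨0, rfl⟩ ⟨Fin.last n, rfl⟩
    (Set.forall_mem_range.2 fun i =>
      hw.orient_nonneg (Fin.zero_le _) (Fin.castSucc_le_castSucc_iff.2 i.le_last))
    (Set.forall_mem_range.2 fun i => hw.orient_nonneg (Fin.zero_le _) (Fin.le_last _))
    (Set.forall_mem_range.2 fun i => by
      rw [orient_rotate]
      exact hw.orient_nonneg (Fin.castSucc_le_castSucc_iff.2 i.le_last) (Fin.le_last _))
  have hfinite : volume (convexHull ℝ (Set.range (w ∘ Fin.castSucc))) ≠ ⊤ :=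
    ((Set.finite_range _).isCompact_convexHull ℝ).measure_ne_top
  rw [hrange, measureReal_def, hvolume, ENNReal.toReal_add hfinite ENNReal.ofReal_ne_top,
    ENNReal.toReal_ofReal]
  · rfl
  · exact div_nonneg (hw.orient_nonneg (Fin.zero_le _) (Fin.le_last _)) two_pos.le

theorem volume_real_convexHull_range_fin {n : ℕ} {w : Fin (n + 1) → ℝ × ℝ} (hw : IsClockwise w) :
    volume.real (convexHull ℝ (Set.range w)) =
      -(∑ i : Fin n, cross (w i.castSucc) (w i.succ) + cross (w (Fin.last n)) (w 0)) / 2 := by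
  induction n with
  | zero => simp [Set.range_unique, measureReal_def, cross_apply, mul_comm]
  | succ n ih =>
    rw [hw.volume_real_convexHull_range_succ, ih (hw.comp_strictMono Fin.strictMono_castSucc),
      Fin.sum_univ_castSucc, orient_eq_cross]
    simp only [Function.comp_apply, Fin.succ_castSucc, Fin.succ_last, Fin.castSucc_zero,
      cross_apply]
    ring

theorem volume_real_convexHull_range {m : ℕ} [NeZero m] {w : Fin m → ℝ × ℝ}
    (hw : IsClockwise w) :
    volume.real (convexHull ℝ (Set.range w)) = -(∑ i, cross (w i) (w (i + 1))) / 2 := by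
  obtain ⟨n, rfl⟩ := Nat.exists_eq_succ_of_ne_zero (NeZero.ne m)
  rw [hw.volume_real_convexHull_range_fin, Fin.sum_univ_castSucc]
  simp only [Fin.coeSucc_eq_succ, Fin.last_add_one]

end IsClockwise

theorem cross_eq_of_mem_line {t s x₁ y₁ x₂ y₂ : ℝ} (h₁ : y₁ = t * x₁ + s) (h₂ : y₂ = t * x₂ + s) :
    cross (x₁, y₁) (x₂, y₂) = s * (x₁ - x₂) := by
  rw [cross_apply, h₁, h₂]
  ring

theorem eval_div_sub_eq {t t' : ℝ} (ht : t ≠ t') (s s' : ℝ) :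
    t * ((s' - s) / (t - t')) + s = t' * ((s' - s) / (t - t')) + s' := by
  have hsub : t - t' ≠ 0 := sub_ne_zero.2 ht
  field_simp
  ring

end PlanarPolygon

open PlanarPolygon in
theorem cc_polygon_area_general {m : ℕ} [NeZero m] {t s x : Fin m → ℝ}
    (hx : ∀ i, t i * x i + s i = t (i + 1) * x i + s (i + 1))
    (hw : IsClockwise fun i => (x i, t i * x i + s i)) :
    volume.real (convexHull ℝ (Set.range fun i => (x i, t i * x i + s i))) =
      ∑ i, ((t i - t (i + 1)) / 2 * x i ^ 2 + (s i - s (i + 1)) * x i) := by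
  have hcross (i : Fin m) :
      cross (x i, t i * x i + s i) (x (i + 1), t (i + 1) * x (i + 1) + s (i + 1)) =
        s (i + 1) * (x i - x (i + 1)) := cross_eq_of_mem_line (hx i) rfl
  have hcritical (i : Fin m) : (t i - t (i + 1)) / 2 * x i ^ 2 + (s i - s (i + 1)) * x i =
      (s i - s (i + 1)) * x i / 2 := by linear_combination x i / 2 * hx i
  have hshift : ∑ i, s (i + 1) * x (i + 1) = ∑ i, s i * x i :=
    Equiv.sum_comp (Equiv.addRight 1) fun i => s i * x i
  rw [hw.volume_real_convexHull_range]
  simp only [hcross, hcritical]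
  simp only [← Finset.sum_div, mul_sub, sub_mul, Finset.sum_sub_distrib, hshift, neg_sub]

/-- For lines `L_i : y = t_i·x + s_i` (i cyclic mod m, m ≥ 3) with
`t_i ≠ t_{i+1}`, let `w_i` be the intersection point of `L_i` and `L_{i+1}`, with
x-coordinate `x_i`, and `f_{i,i+1}(x) = ((t_i − t_{i+1})/2)x² + (s_i − s_{i+1})x`.
If the `w_i` are pairwise distinct and in strictly convex position in clockwise order,
then the area of the polygon (the Lebesgue measure of the convex hull of the `w_i`)
equals `Σ_{i=1}^m f_{i,i+1}(x_i)`. -/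
theorem cc_polygon_area (m : ℕ) (hm : 3 ≤ m) [NeZero m]
    (t s : Fin m → ℝ) (ht : ∀ i : Fin m, t i ≠ t (i + 1)) :
    let x : Fin m → ℝ := fun i => (s (i + 1) - s i) / (t i - t (i + 1))
    let w : Fin m → ℝ × ℝ := fun i => (x i, t i * x i + s i)
    (∀ i j : Fin m, i ≠ j → w i ≠ w j) →
    (∀ i j k : Fin m, i < j → j < k →
      (w j - w i).1 * (w k - w i).2 - (w j - w i).2 * (w k - w i).1 < 0) →
    (volume (convexHull ℝ (Set.range w))).toReal
      = ∑ i : Fin m, ((t i - t (i + 1)) / 2 * (x i) ^ 2 + (s i - s (i + 1)) * x i) := by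
  intro x w _ hw
  exact cc_polygon_area_general
    (fun i => PlanarPolygon.eval_div_sub_eq (ht i) (s i) (s (i + 1)))
    fun i j k hij hjk => (hw i j k hij hjk).le
end
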